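/- Let p ∈ ℝ² and let ℓ, w be positive reals with w ≥ 4ℓ. Then the two-dimensional Lebesgue measure of the set of offsets (x,y) ∈ [0,w]² for which p is within ℓ∞-distance 2ℓ of some vertex of the width-w grid with origin (x,y) — i.e., for which there exist integers a, b with max(|p₁ − (x + aw)|, |p₂ − (y + bw)|) ≤ 2ℓ — is exactly 16ℓ². -/

import Mathlib

open MeasureTheory

/-! The vertex condition splits over the two coordinates, so the set of offsets is a product of two
sets of reals. In one coordinate, `x` is within `r` of `c` modulo `w` exactly when its image in the
circle `ℝ / wℤ` lies in the closed ball of radius `r` about the image of `c`, and a window of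
length `w` maps onto the circle preserving measure. -/

theorem dist_coe_addCircle_le_iff {w c x r : ℝ} :
    dist (x : AddCircle w) c ≤ r ↔ ∃ a : ℤ, |c - (x + a * w)| ≤ r := by
  change x ∈ ((↑) : ℝ → AddCircle w) ⁻¹' Metric.closedBall (c : AddCircle w) r ↔ _
  simp only [AddCircle.coe_real_preimage_closedBall_eq_iUnion, Set.mem_iUnion,
    Metric.mem_closedBall, Real.dist_eq, zsmul_eq_mul]
  rw [← (Equiv.neg ℤ).exists_congr_right]
  refine exists_congr fun a => ?_
  rw [abs_sub_comm, Equiv.neg_apply, Int.cast_neg]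
  ring_nf

theorem measurePreserving_addCircle_mk_Icc (w : ℝ) [Fact (0 < w)] (t : ℝ) :
    MeasurePreserving ((↑) : ℝ → AddCircle w) (volume.restrict (Set.Icc t (t + w))) := by
  rw [← Measure.restrict_congr_set Ioc_ae_eq_Icc]
  exact AddCircle.measurePreserving_mk w t

theorem volume_Icc_near_lattice {w : ℝ} (hw : 0 < w) (t c r : ℝ) :
    volume {x ∈ Set.Icc t (t + w) | ∃ a : ℤ, |c - (x + a * w)| ≤ r}
      = ENNReal.ofReal (min w (2 * r)) := by
  have : Fact (0 < w) := ⟨hw⟩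
  have near_eq : {x ∈ Set.Icc t (t + w) | ∃ a : ℤ, |c - (x + a * w)| ≤ r}
      = Set.Icc t (t + w) ∩ (↑) ⁻¹' Metric.closedBall (c : AddCircle w) r := by
    ext x
    exact and_congr_right fun _ => dist_coe_addCircle_le_iff.symm
  rw [near_eq, Set.inter_comm, ← Measure.restrict_apply' measurableSet_Icc,
    (measurePreserving_addCircle_mk_Icc w t).measure_preimage
      Metric.isClosed_closedBall.nullMeasurableSet,
    AddCircle.volume_closedBall]

theorem measure_offsets_near_vertex_general {w : ℝ} (hw : 0 < w) (t p : ℝ × ℝ) (r : ℝ) :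
    volume {o : ℝ × ℝ | o.1 ∈ Set.Icc t.1 (t.1 + w) ∧ o.2 ∈ Set.Icc t.2 (t.2 + w) ∧
        ∃ a b : ℤ, max |p.1 - (o.1 + a * w)| |p.2 - (o.2 + b * w)| ≤ r}
      = ENNReal.ofReal (min w (2 * r)) ^ 2 := by
  have offsets_eq_prod :
      {o : ℝ × ℝ | o.1 ∈ Set.Icc t.1 (t.1 + w) ∧ o.2 ∈ Set.Icc t.2 (t.2 + w) ∧
        ∃ a b : ℤ, max |p.1 - (o.1 + a * w)| |p.2 - (o.2 + b * w)| ≤ r}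
      = {x ∈ Set.Icc t.1 (t.1 + w) | ∃ a : ℤ, |p.1 - (x + a * w)| ≤ r} ×ˢ
        {y ∈ Set.Icc t.2 (t.2 + w) | ∃ b : ℤ, |p.2 - (y + b * w)| ≤ r} := by
    ext o
    simp only [Set.mem_ofPred_eq, Set.mem_prod, max_le_iff, exists_and_left, exists_and_right]
    tauto
  rw [offsets_eq_prod, Measure.volume_eq_prod, Measure.prod_prod,
    volume_Icc_near_lattice hw, volume_Icc_near_lattice hw, sq]

/-- For a fixed point `p ∈ ℝ²` and reals `0 < ℓ`, `0 < w` with `w ≥ 4ℓ`, the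
set of offsets `(x,y) ∈ [0,w]²` for which `p` is within ℓ∞-distance `2ℓ` of
some vertex of the width-`w` grid with origin `(x,y)` has Lebesgue measure
exactly `16ℓ²`. -/
theorem measure_offsets_near_vertex (p : ℝ × ℝ) (ℓ w : ℝ)
    (hℓ : 0 < ℓ) (hw : 0 < w) (hwl : 4 * ℓ ≤ w) :
    volume {o : ℝ × ℝ | o.1 ∈ Set.Icc (0 : ℝ) w ∧ o.2 ∈ Set.Icc (0 : ℝ) w ∧
        ∃ a b : ℤ, max |p.1 - (o.1 + a * w)| |p.2 - (o.2 + b * w)| ≤ 2 * ℓ}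
      = ENNReal.ofReal (16 * ℓ ^ 2) := by
  have min_eq : min w (2 * (2 * ℓ)) = 4 * ℓ := by
    rw [min_eq_right (by linarith)]
    ring
  rw [show 16 * ℓ ^ 2 = (4 * ℓ) ^ 2 by ring, ENNReal.ofReal_pow (by positivity), ← min_eq]
  simpa only [Prod.fst_zero, Prod.snd_zero, zero_add] using
    measure_offsets_near_vertex_general hw 0 p (2 * ℓ)
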